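/- For all i, j ∈ {1,2} and every point of Ω: ⟨∂i∂j y0, d0⟩ = Σ_{n,p=1}^{3} G_{np} Γ^n_{ij} Γ^p_{33} and ⟨∂i b0, ∂j b0⟩ = Σ_{n,p=1}^{3} G_{np} Γ^n_{i3} Γ^p_{j3}. -/

import Mathlib

noncomputable section

open scoped Topology ENNReal
open Filter MeasureTheory

/-- Points of the midplate `Ω ⊆ ℝ²`. -/
abbrev E2 : Type := Fin 2 → ℝ
/-- Vectors in `ℝ³`. -/
abbrev V3 : Type := Fin 3 → ℝ
/-- `3×3` real arrays. -/
abbrev M3 : Type := Fin 3 → Fin 3 → ℝ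
/-- `2×2` real arrays. -/
abbrev M2 : Type := Fin 2 → Fin 2 → ℝ

/-- Partial derivative `∂ᵢ` of a scalar field on `ℝ²`. -/
def pd2 (i : Fin 2) (f : E2 → ℝ) (x : E2) : ℝ := fderiv ℝ f x (Pi.single i 1)

/-- Partial derivative `∂ᵢ` of an `ℝ³`-valued field on `ℝ²`. -/
def pdv (i : Fin 2) (f : E2 → V3) (x : E2) : V3 := fderiv ℝ f x (Pi.single i 1)

/-- Euclidean inner product on `ℝ³`. -/
def dot3 (u v : V3) : ℝ := ∑ k, u k * v k

/-- Matrix product of `3×3` arrays. -/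
def mmul (A B : M3) : M3 := fun i j => ∑ k, A i k * B k j

/-- Transpose of a `3×3` array. -/
def transp (A : M3) : M3 := fun i j => A j i

/-- The identity `3×3` array. -/
def idm : M3 := fun i j => if i = j then 1 else 0

/-- Frobenius norm of a `3×3` array. -/
def fnorm (A : M3) : ℝ := Real.sqrt (∑ i, ∑ j, (A i j) ^ 2)

/-- Symmetry of a `3×3` array. -/
def SymM (A : M3) : Prop := ∀ i j, A i j = A j i

/-- Positive definiteness of a `3×3` array. -/
def PosDefM (A : M3) : Prop := ∀ v : V3, v ≠ 0 → 0 < ∑ i, ∑ j, v i * A i j * v j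

/-- The special orthogonal group `SO(3)`. -/
def SO3 : Set M3 := {R | mmul (transp R) R = idm ∧ (Matrix.of R).det = 1}

/-- Entries of the inverse of a `3×3` array. -/
def minv (A : M3) : M3 := fun i j => (Matrix.of A)⁻¹ i j

/-- The columns `∂₁y₀, ∂₂y₀, b₀` of the matrix `Q₀`. -/
def Qcol (y0 b0 : E2 → V3) (x : E2) : Fin 3 → V3 := ![pdv 0 y0 x, pdv 1 y0 x, b0 x]

/-- The determinant of `Q₀`. -/
def Qdet (y0 b0 : E2 → V3) (x : E2) : ℝ := (Matrix.of fun a j => Qcol y0 b0 x j a).det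

/-- Partial derivatives `∂₁, ∂₂, ∂₃` of an `x₃`-independent scalar field (so `∂₃ = 0`). -/
def pd3 (k : Fin 3) (f : E2 → ℝ) (x : E2) : ℝ :=
  if h : (k : ℕ) < 2 then pd2 ⟨(k : ℕ), h⟩ f x else 0

/-- Christoffel symbols `Γ^n_{kl}` of the (`x₃`-independent) metric `G`. -/
def Gamma (G : E2 → M3) (n k l : Fin 3) (x : E2) : ℝ :=
  (1 / 2) * ∑ s, minv (G x) n s *
    (pd3 k (fun y => G y s l) x + pd3 l (fun y => G y s k) x - pd3 s (fun y => G y k l) x)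

/-- Covariant Riemann curvatures `R_{iklm}` of the (`x₃`-independent) metric `G`;
indices are `0`-based, so e.g. `R_{1313} = Riem G 0 2 0 2`. -/
def Riem (G : E2 → M3) (i k l m : Fin 3) (x : E2) : ℝ :=
  (1 / 2) * (pd3 k (fun y => pd3 l (fun z => G z i m) y) x
           + pd3 i (fun y => pd3 m (fun z => G z k l) y) x
           - pd3 k (fun y => pd3 m (fun z => G z i l) y) x
           - pd3 i (fun y => pd3 l (fun z => G z k m) y) x)
    + ∑ n, ∑ p, G x n p *
        (Gamma G n k l x * Gamma G p i m x - Gamma G n k m x * Gamma G p i l x)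

/-- The deformation gradient `∇u = [∂₁u | ∂₂u | ∂₃u]` of `u : Ω^h → ℝ³`. -/
def gradu (u : E2 × ℝ → V3) (x : E2 × ℝ) : M3 :=
  fun a j => ![fderiv ℝ u x (Pi.single 0 1, 0),
               fderiv ℝ u x (Pi.single 1 1, 0),
               fderiv ℝ u x (0, 1)] j a

/-- The elastic energy `E^h(u) = (1/h) ∫_{Ω × (-h/2,h/2)} W(∇u A⁻¹)`. -/
def Eh (W : M3 → ℝ≥0∞) (A : E2 → M3) (Ω : Set E2) (h : ℝ) (u : E2 × ℝ → V3) : ℝ≥0∞ :=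
  (ENNReal.ofReal h)⁻¹ *
    ∫⁻ x in Ω ×ˢ Set.Ioo (-(h / 2)) (h / 2), W (mmul (gradu u x) (minv (A x.1)))

/-- Symmetric part of a `3×3` array. -/
def symM (A : M3) : M3 := fun i j => (A i j + A j i) / 2
/-- Symmetric part of a `2×2` array. -/
def sym2M (A : M2) : M2 := fun i j => (A i j + A j i) / 2
/-- `F₂*`: the `3×3` array with principal `2×2` minor `F₂` and all other entries `0`. -/
def put (F2 : M2) : M3 :=
  fun i j => if h : (i : ℕ) < 2 ∧ (j : ℕ) < 2 then F2 ⟨i, h.1⟩ ⟨j, h.2⟩ else 0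
/-- The tensor product `c ⊗ e₃`. -/
def tene3 (c : V3) : M3 := fun i j => if j = 2 then c i else 0
/-- Cross product in `ℝ³`. -/
def cross (u v : V3) : V3 :=
  ![u 1 * v 2 - u 2 * v 1, u 2 * v 0 - u 0 * v 2, u 0 * v 1 - u 1 * v 0]
/-- The quadratic form `Q₃(F) = D²W(Id₃)(F,F)`, for a density `w`. -/
def Q3d (w : M3 → ℝ) (F : M3) : ℝ := fderiv ℝ (fun P => fderiv ℝ w P F) idm F
/-- The reduced quadratic form `Q_{2,A}(x', F₂)`:
the infimum of `Q₃(A⁻¹ F̃ A⁻¹)` over all `F̃` whose principal `2×2` minor is `F₂`. -/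
def QA (w : M3 → ℝ) (A : E2 → M3) (x : E2) (F2 : M2) : ℝ :=
  ⨅ Ft : {Ft : M3 // ∀ i j : Fin 2, Ft i.castSucc j.castSucc = F2 i j},
    Q3d w (mmul (minv (A x)) (mmul Ft.1 (minv (A x))))

/-!
Put `u(x', t) = y₀ + t b₀ + (t² / 2) d₀`. At `t = 0` its gradient is `Q₀`, and the conditions on
`b₀` and `d₀` say exactly that `(∇u)ᵀ∇u` has vanishing `t`-derivative there, like the
`x₃`-independent metric `G`. So all first derivatives of `G` agree at `t = 0` with those of the
induced metric `(∇u)ᵀ∇u`, hence so do the Christoffel symbols, and the Gauss formula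
`∂ₖ∂ₗu = Σₙ Γⁿₖₗ ∂ₙu` holds. Pairing two such formulas by means of `Q₀ᵀQ₀ = G` gives every inner
product of second derivatives of `u`; at `t = 0` these second derivatives are `∂ᵢ∂ⱼy₀`, `∂ᵢb₀`
and `d₀`.
-/

open scoped Matrix

section Gram

variable {m n R : Type*} [Fintype m] [Fintype n]

theorem transpose_mulVec_dotProduct_transpose_mulVec [CommSemiring R] (A : Matrix m n R)
    (v w : m → R) :
    (Aᵀ *ᵥ v) ⬝ᵥ (Aᵀ *ᵥ w) = v ⬝ᵥ ((A * Aᵀ) *ᵥ w) := by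
  rw [Matrix.dotProduct_mulVec, Matrix.vecMul_mulVec, Matrix.transpose_transpose,
    ← Matrix.dotProduct_mulVec]

theorem transpose_mulVec_gram_inv_mulVec [DecidableEq n] [CommRing R] {A : Matrix n n R}
    (hA : IsUnit A.det) (w : n → R) : Aᵀ *ᵥ ((A * Aᵀ)⁻¹ *ᵥ (A *ᵥ w)) = w := by
  have hAt : IsUnit Aᵀ.det := A.isUnit_det_transpose hA
  rw [Matrix.mul_inv_rev, Matrix.mulVec_mulVec, Matrix.mulVec_mulVec,
    Matrix.mul_nonsing_inv_cancel_left _ _ hAt, Matrix.nonsing_inv_mul _ hA, Matrix.one_mulVec]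

end Gram

section Calculus

variable {𝕜 E F ι : Type*} [NontriviallyNormedField 𝕜] [NormedAddCommGroup E] [NormedSpace 𝕜 E]
  [NormedAddCommGroup F] [NormedSpace 𝕜 F] {x : E}

theorem fderiv_dotProduct_apply [Fintype ι] {f g : E → ι → 𝕜}
    (hf : DifferentiableAt 𝕜 f x) (hg : DifferentiableAt 𝕜 g x) (v : E) :
    fderiv 𝕜 (fun y => f y ⬝ᵥ g y) x v = fderiv 𝕜 f x v ⬝ᵥ g x + f x ⬝ᵥ fderiv 𝕜 g x v := by
  have hfi := hasFDerivAt_pi'.1 hf.hasFDerivAt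
  have hgi := hasFDerivAt_pi'.1 hg.hasFDerivAt
  have hsum : HasFDerivAt (fun y => f y ⬝ᵥ g y) _ x :=
    HasFDerivAt.fun_sum fun a (_ : a ∈ Finset.univ) => (hfi a).fun_mul (hgi a)
  rw [hsum.fderiv]
  simp [dotProduct, Finset.sum_add_distrib, mul_comm, add_comm]

theorem differentiableAt_fderiv {f : E → F} (hf : ContDiffAt 𝕜 2 f x) :
    DifferentiableAt 𝕜 (fderiv 𝕜 f) x :=
  (hf.fderiv_right (m := 1) (by norm_num)).differentiableAt one_ne_zero

theorem fderiv_fderiv_apply {f : E → F} (hf : DifferentiableAt 𝕜 (fderiv 𝕜 f) x) (v w : E) :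
    fderiv 𝕜 (fun y => fderiv 𝕜 f y w) x v = fderiv 𝕜 (fderiv 𝕜 f) x v w := by
  simp [fderiv_clm_apply hf (differentiableAt_const w)]

end Calculus

theorem dot3_comm (u v : V3) : dot3 u v = dot3 v u :=
  dotProduct_comm u v

theorem pd2_dot3 {f g : E2 → V3} {x : E2} (hf : DifferentiableAt ℝ f x)
    (hg : DifferentiableAt ℝ g x) (i : Fin 2) :
    pd2 i (fun y => dot3 (f y) (g y)) x = dot3 (pdv i f x) (g x) + dot3 (f x) (pdv i g x) :=
  fderiv_dotProduct_apply hf hg _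

theorem differentiableAt_pdv {f : E2 → V3} {x : E2} (hf : ContDiffAt ℝ 2 f x) (i : Fin 2) :
    DifferentiableAt ℝ (pdv i f) x :=
  (differentiableAt_fderiv hf).clm_apply (differentiableAt_const _)

theorem pdv_comm {f : E2 → V3} {x : E2} (hf : ContDiffAt ℝ 2 f x) (i j : Fin 2) :
    pdv i (pdv j f) x = pdv j (pdv i f) x := by
  have hf' : DifferentiableAt ℝ (fderiv ℝ f) x := differentiableAt_fderiv hf
  calc pdv i (pdv j f) x
      = fderiv ℝ (fderiv ℝ f) x (Pi.single i 1) (Pi.single j 1) := fderiv_fderiv_apply hf' _ _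
    _ = fderiv ℝ (fderiv ℝ f) x (Pi.single j 1) (Pi.single i 1) :=
        hf.isSymmSndFDerivAt (by simp) _ _
    _ = pdv j (pdv i f) x := (fderiv_fderiv_apply hf' _ _).symm

theorem pd3_castSucc (i : Fin 2) (f : E2 → ℝ) (x : E2) : pd3 i.castSucc f x = pd2 i f x :=
  dif_pos i.isLt

theorem pd3_two (f : E2 → ℝ) (x : E2) : pd3 2 f x = 0 :=
  dif_neg (lt_irrefl 2)

theorem pd3_congr_of_eventuallyEq {f g : E2 → ℝ} {x : E2} (h : f =ᶠ[𝓝 x] g) (k : Fin 3) :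
    pd3 k f x = pd3 k g x := by
  simp only [pd3, pd2, h.fderiv_eq]

/-- The second derivatives `∂ₖ∂ₗu` at `t = 0` of the quadratic extension
`u(x', t) = y₀ + t b₀ + (t² / 2) d₀` of `y₀`; only the value `d` of `d₀` at `x` enters. -/
def extHessian (y0 b0 : E2 → V3) (d : V3) (x : E2) : Fin 3 → Fin 3 → V3 :=
  Fin.snoc (fun i => Fin.snoc (fun j => pdv i (pdv j y0) x) (pdv i b0 x))
    (Fin.snoc (fun j => pdv j b0 x) d)

section Extension

variable {y0 b0 : E2 → V3} {d : V3} {x : E2}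

@[simp]
theorem Qcol_castSucc (i : Fin 2) : Qcol y0 b0 x i.castSucc = pdv i y0 x := by
  fin_cases i <;> rfl

@[simp]
theorem Qcol_two : Qcol y0 b0 x 2 = b0 x :=
  rfl

@[simp]
theorem extHessian_castSucc_castSucc (i j : Fin 2) :
    extHessian y0 b0 d x i.castSucc j.castSucc = pdv i (pdv j y0) x := by
  simp [extHessian]

@[simp]
theorem extHessian_castSucc_two (i : Fin 2) :
    extHessian y0 b0 d x i.castSucc 2 = pdv i b0 x := by
  simp only [extHessian, Fin.snoc_castSucc]
  rfl

@[simp]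
theorem extHessian_two_castSucc (j : Fin 2) :
    extHessian y0 b0 d x 2 j.castSucc = pdv j b0 x :=
  Fin.snoc_castSucc (α := fun _ => V3) d (fun i => pdv i b0 x) j

@[simp]
theorem extHessian_two_two : extHessian y0 b0 d x 2 2 = d :=
  rfl

theorem extHessian_comm (hy0 : ContDiffAt ℝ 2 y0 x) (k l : Fin 3) :
    extHessian y0 b0 d x k l = extHessian y0 b0 d x l k := by
  cases k using Fin.lastCases <;> cases l using Fin.lastCases <;> simp [pdv_comm hy0]

theorem differentiableAt_Qcol (hy0 : ContDiffAt ℝ 2 y0 x) (hb0 : DifferentiableAt ℝ b0 x)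
    (s : Fin 3) : DifferentiableAt ℝ (fun y => Qcol y0 b0 y s) x := by
  cases s using Fin.lastCases with
  | last => exact hb0
  | cast j => simpa only [Qcol_castSucc] using differentiableAt_pdv hy0 j

theorem pdv_Qcol (i : Fin 2) (s : Fin 3) :
    pdv i (fun y => Qcol y0 b0 y s) x = extHessian y0 b0 d x i.castSucc s := by
  cases s using Fin.lastCases <;> simp

theorem dot3_extHessian_two_add
    (hsym : ∀ i j, dot3 (pdv i y0 x) (pdv j b0 x) + dot3 (pdv j y0 x) (pdv i b0 x) = 0)
    (hd_tan : ∀ i, dot3 (pdv i y0 x) d = -dot3 (pdv i b0 x) (b0 x))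
    (hd_nor : dot3 (b0 x) d = 0) (s l : Fin 3) :
    dot3 (extHessian y0 b0 d x 2 s) (Qcol y0 b0 x l)
      + dot3 (Qcol y0 b0 x s) (extHessian y0 b0 d x 2 l) = 0 := by
  cases s using Fin.lastCases with
  | last =>
    cases l using Fin.lastCases with
    | last => simp [dot3_comm d, hd_nor]
    | cast j => simp [dot3_comm d, dot3_comm (b0 x), hd_tan]
  | cast i =>
    cases l using Fin.lastCases with
    | last => simp [hd_tan]
    | cast j => simpa [dot3_comm (pdv i b0 x)] using hsym j i

theorem pd3_dot3_Qcol (hy0 : ContDiffAt ℝ 2 y0 x) (hb0 : DifferentiableAt ℝ b0 x)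
    (hsym : ∀ i j, dot3 (pdv i y0 x) (pdv j b0 x) + dot3 (pdv j y0 x) (pdv i b0 x) = 0)
    (hd_tan : ∀ i, dot3 (pdv i y0 x) d = -dot3 (pdv i b0 x) (b0 x))
    (hd_nor : dot3 (b0 x) d = 0) (k s l : Fin 3) :
    pd3 k (fun y => dot3 (Qcol y0 b0 y s) (Qcol y0 b0 y l)) x =
      dot3 (extHessian y0 b0 d x k s) (Qcol y0 b0 x l)
        + dot3 (Qcol y0 b0 x s) (extHessian y0 b0 d x k l) := by
  cases k using Fin.lastCases with
  | last => exact (pd3_two _ x).trans (dot3_extHessian_two_add hsym hd_tan hd_nor s l).symm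
  | cast i =>
    rw [pd3_castSucc, pd2_dot3 (differentiableAt_Qcol hy0 hb0 s) (differentiableAt_Qcol hy0 hb0 l),
      pdv_Qcol, pdv_Qcol]

end Extension

section Christoffel

variable {G : E2 → M3} {x : E2} {q : Fin 3 → V3} {D : Fin 3 → Fin 3 → V3}

theorem Gamma_eq_sum_minv_mul_dot3
    (hG : ∀ k s l, pd3 k (fun y => G y s l) x = dot3 (D k s) (q l) + dot3 (q s) (D k l))
    (hD : ∀ k l, D k l = D l k) (n k l : Fin 3) :
    Gamma G n k l x = ∑ s, minv (G x) n s * dot3 (q s) (D k l) := by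
  have hkoszul : ∀ s, pd3 k (fun y => G y s l) x + pd3 l (fun y => G y s k) x
      - pd3 s (fun y => G y k l) x = 2 * dot3 (q s) (D k l) := fun s => by
    rw [hG, hG, hG, hD k s, hD l s, hD l k, dot3_comm (D s l)]
    ring
  simp only [Gamma, hkoszul, Finset.mul_sum]
  exact Finset.sum_congr rfl fun s _ => by ring

theorem eq_transpose_mulVec_Gamma (hq : IsUnit (Matrix.of q).det)
    (hgram : ∀ i j, dot3 (q i) (q j) = G x i j)
    (hG : ∀ k s l, pd3 k (fun y => G y s l) x = dot3 (D k s) (q l) + dot3 (q s) (D k l))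
    (hD : ∀ k l, D k l = D l k) (k l : Fin 3) :
    D k l = (Matrix.of q)ᵀ *ᵥ fun n => Gamma G n k l x := by
  have hQ : Matrix.of q * (Matrix.of q)ᵀ = Matrix.of (G x) := Matrix.ext hgram
  have hGamma : (fun n => Gamma G n k l x) = (Matrix.of (G x))⁻¹ *ᵥ (Matrix.of q *ᵥ D k l) :=
    funext fun n => Gamma_eq_sum_minv_mul_dot3 hG hD n k l
  rw [hGamma, ← hQ, transpose_mulVec_gram_inv_mulVec hq]

theorem dot3_eq_sum_mul_Gamma_mul_Gamma (hq : IsUnit (Matrix.of q).det)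
    (hgram : ∀ i j, dot3 (q i) (q j) = G x i j)
    (hG : ∀ k s l, pd3 k (fun y => G y s l) x = dot3 (D k s) (q l) + dot3 (q s) (D k l))
    (hD : ∀ k l, D k l = D l k) (k l k' l' : Fin 3) :
    dot3 (D k l) (D k' l') =
      ∑ n, ∑ p, G x n p * (Gamma G n k l x * Gamma G p k' l' x) := by
  have hQ : Matrix.of q * (Matrix.of q)ᵀ = Matrix.of (G x) := Matrix.ext hgram
  calc dot3 (D k l) (D k' l')
      = ((Matrix.of q)ᵀ *ᵥ fun n => Gamma G n k l x) ⬝ᵥ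
          ((Matrix.of q)ᵀ *ᵥ fun p => Gamma G p k' l' x) := by
        rw [← eq_transpose_mulVec_Gamma hq hgram hG hD, ← eq_transpose_mulVec_Gamma hq hgram hG hD]
        rfl
    _ = (fun n => Gamma G n k l x) ⬝ᵥ (Matrix.of (G x) *ᵥ fun p => Gamma G p k' l' x) := by
        rw [transpose_mulVec_dotProduct_transpose_mulVec, hQ]
    _ = ∑ n, ∑ p, G x n p * (Gamma G n k l x * Gamma G p k' l' x) := by
        simp only [dotProduct, Matrix.mulVec, Matrix.of_apply, Finset.mul_sum, mul_left_comm]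

end Christoffel

theorem stmt10_general {G : E2 → M3} {y0 b0 : E2 → V3} {d : V3} {x : E2}
    (hy0 : ContDiffAt ℝ 2 y0 x) (hb0 : DifferentiableAt ℝ b0 x)
    (hQ : ∀ᶠ y in 𝓝 x, ∀ i j, dot3 (Qcol y0 b0 y i) (Qcol y0 b0 y j) = G y i j)
    (hdet : Qdet y0 b0 x ≠ 0)
    (hsym : ∀ i j, dot3 (pdv i y0 x) (pdv j b0 x) + dot3 (pdv j y0 x) (pdv i b0 x) = 0)
    (hd_tan : ∀ i, dot3 (pdv i y0 x) d = -dot3 (pdv i b0 x) (b0 x))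
    (hd_nor : dot3 (b0 x) d = 0) (k l k' l' : Fin 3) :
    dot3 (extHessian y0 b0 d x k l) (extHessian y0 b0 d x k' l') =
      ∑ n, ∑ p, G x n p * (Gamma G n k l x * Gamma G p k' l' x) := by
  have hq : IsUnit (Matrix.of (Qcol y0 b0 x)).det := by
    rw [← Matrix.det_transpose]
    exact isUnit_iff_ne_zero.2 hdet
  refine dot3_eq_sum_mul_Gamma_mul_Gamma hq hQ.self_of_nhds (fun k s l => ?_)
    (extHessian_comm hy0) k l k' l'
  calc pd3 k (fun y => G y s l) x
      = pd3 k (fun y => dot3 (Qcol y0 b0 y s) (Qcol y0 b0 y l)) x :=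
        pd3_congr_of_eventuallyEq (hQ.mono fun y hy => (hy s l).symm) k
    _ = _ := pd3_dot3_Qcol hy0 hb0 hsym hd_tan hd_nor k s l

/-- `⟨∂ᵢ∂ⱼ y₀, d₀⟩ = Σ G_{np} Γ^n_{ij} Γ^p_{33}` and
`⟨∂ᵢ b₀, ∂ⱼ b₀⟩ = Σ G_{np} Γ^n_{i3} Γ^p_{j3}` on `Ω`. -/
theorem stmt10
    (Ω : Set E2) (hΩo : IsOpen Ω) (hΩb : Bornology.IsBounded Ω)
    (hΩsc : SimplyConnectedSpace ↥Ω)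
    (G : E2 → M3) (hGsm : ContDiffOn ℝ (⊤ : ℕ∞) G (closure Ω))
    (hGsym : ∀ x ∈ closure Ω, SymM (G x)) (hGpos : ∀ x ∈ closure Ω, PosDefM (G x))
    (y0 : E2 → V3) (hy0sm : ContDiffOn ℝ (⊤ : ℕ∞) y0 (closure Ω))
    (himm : ∀ x ∈ Ω, ∀ i j : Fin 2,
      dot3 (pdv i y0 x) (pdv j y0 x) = G x i.castSucc j.castSucc)
    (b0 : E2 → V3) (hb0sm : ContDiffOn ℝ (⊤ : ℕ∞) b0 (closure Ω))
    (hQ0 : ∀ x ∈ Ω, ∀ i j : Fin 3,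
      dot3 (Qcol y0 b0 x i) (Qcol y0 b0 x j) = G x i j)
    (hQdet : ∀ x ∈ Ω, 0 < Qdet y0 b0 x)
    (hsym0 : ∀ x ∈ Ω, ∀ i j : Fin 2,
      dot3 (pdv i y0 x) (pdv j b0 x) + dot3 (pdv j y0 x) (pdv i b0 x) = 0)
    (d0 : E2 → V3) (hd0sm : ContDiffOn ℝ (⊤ : ℕ∞) d0 (closure Ω))
    (hd0 : ∀ x ∈ Ω,
      (∀ i : Fin 2, dot3 (Qcol y0 b0 x i.castSucc) (d0 x) = - dot3 (pdv i b0 x) (b0 x)) ∧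
      dot3 (Qcol y0 b0 x 2) (d0 x) = 0)
 :
    ∀ x ∈ Ω, ∀ i j : Fin 2,
      dot3 (pdv i (fun y => pdv j y0 y) x) (d0 x) =
        (∑ n : Fin 3, ∑ p : Fin 3,
          G x n p * (Gamma G n i.castSucc j.castSucc x * Gamma G p 2 2 x)) ∧
      dot3 (pdv i b0 x) (pdv j b0 x) =
        (∑ n : Fin 3, ∑ p : Fin 3,
          G x n p * (Gamma G n i.castSucc 2 x * Gamma G p j.castSucc 2 x)) := by
  intro x hx i j
  have hΩ : Ω ∈ 𝓝 x := hΩo.mem_nhds hx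
  have hy0 : ContDiffAt ℝ 2 y0 x :=
    ((hy0sm.mono subset_closure).contDiffAt hΩ).of_le (WithTop.coe_le_coe.2 le_top)
  have hb0 : DifferentiableAt ℝ b0 x :=
    ((hb0sm.mono subset_closure).contDiffAt hΩ).differentiableAt (by simp)
  have hinner := stmt10_general hy0 hb0 (mem_of_superset hΩ hQ0) (hQdet x hx).ne' (hsym0 x hx)
    (by simpa using (hd0 x hx).1) (hd0 x hx).2
  exact ⟨by simpa using hinner i.castSucc j.castSucc 2 2,
    by simpa using hinner i.castSucc 2 j.castSucc 2⟩
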